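/- Let N ∈ ℕ with N ≥ 3, let μ ∈ ℂ, let a : ℤ → ℂ satisfy a_{n+N} = a_n for all n ∈ ℤ, and let y : ℤ → ℂ satisfy the discrete Hill (Jacobi) equation a_{n−1} y_{n−1} + a_n y_{n+1} = μ y_n for all n ∈ ℤ together with the Dirichlet-type boundary conditions y_1 = 0 and y_{N+1} = 0. Then ∑_{n=1}^{N} a_n (a_{n+1}^2 − a_{n−1}^2) y_n y_{n+1} = μ · a_0^2 · (y_N^2 − y_0^2). -/

import Mathlib

/-!
The sum telescopes. Put
`F n = μ (a_n² y_n² + a_{n-1}² y_{n-1}² + a_{n-1}² y_n²) - μ² a_{n-1} y_{n-1} y_n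
  - a_n³ y_n y_{n+1} - a_{n-1}³ y_{n-1} y_n`.
The Hill equation at `n` and `n + 1` shows that the `n`-th summand equals `F (n + 1) - F n`
(`hillPotential_succ_sub`). Every term of `F n` except `μ a_{n-1}² y_{n-1}²` contains the factor
`y_n`, so the Dirichlet conditions reduce `F (N + 1) - F 1` to `μ (a_N² y_N² - a_0² y_0²)`, and
`a_N = a_0` by periodicity.
-/

/-- The discrete antiderivative `F` of the summand `a_n (a_{n+1}² - a_{n-1}²) y_n y_{n+1}` along
solutions of the Hill equation. -/
def hillPotential (μ : ℂ) (a y : ℤ → ℂ) (n : ℤ) : ℂ :=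
  μ * (a n ^ 2 * y n ^ 2 + a (n - 1) ^ 2 * y (n - 1) ^ 2 + a (n - 1) ^ 2 * y n ^ 2)
    - μ ^ 2 * (a (n - 1) * y (n - 1) * y n)
    - a n ^ 3 * y n * y (n + 1) - a (n - 1) ^ 3 * y (n - 1) * y n

lemma hillPotential_succ_sub (μ : ℂ) (a y : ℤ → ℂ)
    (hill : ∀ n : ℤ, a (n - 1) * y (n - 1) + a n * y (n + 1) = μ * y n) (n : ℤ) :
    a n * (a (n + 1) ^ 2 - a (n - 1) ^ 2) * y n * y (n + 1) =
      hillPotential μ a y (n + 1) - hillPotential μ a y n := by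
  have h0 := hill n
  have h1 := hill (n + 1)
  simp only [hillPotential, add_sub_cancel_right] at h1 ⊢
  linear_combination a (n + 1) ^ 2 * y (n + 1) * h1 +
    (μ * (a (n - 1) * y (n - 1) - a n * y (n + 1)) - a (n - 1) ^ 2 * y n) * h0

lemma sum_Icc_one_telescope (F : ℤ → ℂ) (M : ℕ) :
    ∑ n ∈ Finset.Icc (1 : ℤ) (M : ℤ), (F (n + 1) - F n) = F (M + 1) - F 1 := by
  induction M with
  | zero => simp
  | succ k ih =>
    have h : Finset.Icc (1 : ℤ) ((k + 1 : ℕ) : ℤ) =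
        insert ((k : ℤ) + 1) (Finset.Icc (1 : ℤ) (k : ℤ)) := by
      ext x
      simp only [Finset.mem_Icc, Finset.mem_insert]
      omega
    rw [h, Finset.sum_insert (by simp), ih]
    push_cast
    ring

theorem stmt_11 (N : ℕ) (hN : 3 ≤ N) (μ : ℂ) (a y : ℤ → ℂ)
    (ha : ∀ n : ℤ, a (n + N) = a n)
    (hill : ∀ n : ℤ, a (n - 1) * y (n - 1) + a n * y (n + 1) = μ * y n)
    (hy1 : y 1 = 0) (hyN1 : y ((N : ℤ) + 1) = 0) :
    ∑ n ∈ Finset.Icc (1 : ℤ) (N : ℤ),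
      a n * (a (n + 1) ^ 2 - a (n - 1) ^ 2) * y n * y (n + 1) =
        μ * a 0 ^ 2 * (y (N : ℤ) ^ 2 - y 0 ^ 2) := by
  have haN : a (N : ℤ) = a 0 := by simpa using ha 0
  rw [Finset.sum_congr rfl fun n _ => hillPotential_succ_sub μ a y hill n,
    sum_Icc_one_telescope]
  simp only [hillPotential, add_sub_cancel_right, sub_self, hy1, hyN1, haN]
  ring
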